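/- For all integers d ≥ 2 and n ≥ 1 and all unit vectors α, β ∈ (ℂ^d)^{⊗n}, one has ⟨α ⊗ β| Q |α ⊗ β⟩ ≤ (3/4)^{n/2}, where Q = (P_2^{(d)})^{⊗n} is regarded (after reordering tensor factors) as an operator on ((ℂ^d)^{⊗n})_A ⊗ ((ℂ^d)^{⊗n})_B with the A side collecting the first factor of each antisymmetric pair and the B side the second. (This yields the paper's lower bound E^∞_{R,sep}(α_d) ≥ (1/2)·log₂(4/3) on the regularised relative entropy of entanglement with respect to separable states.) -/

import Mathlib

open scoped BigOperators
open Classical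
open scoped ComplexOrder

noncomputable section

/-- Partial trace over the second tensor factor:
`(ptraceSnd M) a a' = ∑ b, M (a,b) (a',b)`. -/
def ptraceSnd {α β : Type*} [Fintype β] (M : Matrix (α × β) (α × β) ℂ) : Matrix α α ℂ :=
  Matrix.of fun a a' => ∑ b : β, M (a, b) (a', b)

/-- Von Neumann entropy (in bits) of a matrix, via the eigenvalues of a Hermitian matrix
(with the convention `0 * log₂ 0 = 0`, automatic since `Real.logb 2 0 = 0`). -/
def vnEntropy {ι : Type*} [Fintype ι] [DecidableEq ι] (ρ : Matrix ι ι ℂ) : ℝ :=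
  if h : ρ.IsHermitian then -∑ i, h.eigenvalues i * Real.logb 2 (h.eigenvalues i) else 0

/-- Entanglement of formation of a bipartite (density) matrix: the infimum of the average
entropy of entanglement over all finite pure-state ensembles for `ρ`. -/
def EoF {α β : Type*} [Fintype α] [DecidableEq α] [Fintype β] [DecidableEq β]
    (ρ : Matrix (α × β) (α × β) ℂ) : ℝ :=
  sInf {E : ℝ | ∃ (k : ℕ) (p : Fin k → ℝ) (ψ : Fin k → (α × β → ℂ)),
    (∀ i, 0 ≤ p i) ∧ (∑ i, p i = 1) ∧
    (∀ i, ∑ x, Complex.normSq (ψ i x) = 1) ∧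
    (∑ i, p i • Matrix.vecMulVec (ψ i) (star (ψ i)) = ρ) ∧
    E = ∑ i, p i * vnEntropy (ptraceSnd (Matrix.vecMulVec (ψ i) (star (ψ i))))}

/-- The antisymmetric projector `P₂^{(d)} = (1/2)(𝟙 - F)` on `ℂ^d ⊗ ℂ^d`. -/
def asymProj (d : ℕ) : Matrix (Fin d × Fin d) (Fin d × Fin d) ℂ :=
  Matrix.of fun p q => (1 / 2 : ℂ) *
    ((if p.1 = q.1 ∧ p.2 = q.2 then 1 else 0) - (if p.1 = q.2 ∧ p.2 = q.1 then 1 else 0))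

/-- The antisymmetric state `α_d = P₂^{(d)} / binom(d,2)`. -/
def antisymState (d : ℕ) : Matrix (Fin d × Fin d) (Fin d × Fin d) ℂ :=
  (1 / (Nat.choose d 2 : ℂ)) • asymProj d

/-- `α_d^{⊗n}`, viewed as a bipartite state on `((ℂ^d)^{⊗n})_A ⊗ ((ℂ^d)^{⊗n})_B`
(the `n` first tensor factors grouped on the `A` side, the `n` second ones on the `B` side). -/
def alphaPow (d n : ℕ) :
    Matrix ((Fin n → Fin d) × (Fin n → Fin d)) ((Fin n → Fin d) × (Fin n → Fin d)) ℂ :=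
  Matrix.of fun p q => ∏ i : Fin n, antisymState d (p.1 i, p.2 i) (q.1 i, q.2 i)

/-- `(P₂^{(d)})^{⊗n}`, viewed as an operator on `((ℂ^d)^{⊗n})_A ⊗ ((ℂ^d)^{⊗n})_B`
(the `n` first tensor factors grouped on the `A` side, the `n` second ones on the `B` side). -/
def asymPow (d n : ℕ) :
    Matrix ((Fin n → Fin d) × (Fin n → Fin d)) ((Fin n → Fin d) × (Fin n → Fin d)) ℂ :=
  Matrix.of fun p q => ∏ i : Fin n, asymProj d (p.1 i, p.2 i) (q.1 i, q.2 i)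

/-- The antisymmetrizer `P_k^{(d)} = (1/k!) ∑_{σ ∈ S_k} sgn(σ) U_σ` on `(ℂ^d)^{⊗k}`. -/
def asymProjK (d k : ℕ) : Matrix (Fin k → Fin d) (Fin k → Fin d) ℂ :=
  Matrix.of fun f g => (1 / (Nat.factorial k) : ℂ) *
    ∑ σ : Equiv.Perm (Fin k), ((Equiv.Perm.sign σ : ℤ) : ℂ) * (if f = g ∘ σ then 1 else 0)

/-- Quantum conditional mutual information `I(A;B|E) = H(AE) + H(BE) - H(ABE) - H(E)`
(in bits) of a tripartite (density) matrix. -/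
def condMutInfo {α β γ : Type*} [Fintype α] [DecidableEq α] [Fintype β] [DecidableEq β]
    [Fintype γ] [DecidableEq γ] (ρ : Matrix ((α × β) × γ) ((α × β) × γ) ℂ) : ℝ :=
  vnEntropy (Matrix.of fun p q : α × γ => ∑ b : β, ρ ((p.1, b), p.2) ((q.1, b), q.2))
  + vnEntropy (Matrix.of fun p q : β × γ => ∑ a : α, ρ ((a, p.1), p.2) ((a, q.1), q.2))
  - vnEntropy ρ
  - vnEntropy (Matrix.of fun e e' : γ => ∑ a : α, ∑ b : β, ρ ((a, b), e) ((a, b), e'))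

/-- Squashed entanglement: `E_sq(ρ_AB) = inf (1/2) I(A;B|E)` over all finite-dimensional
extensions `ρ_ABE` of `ρ_AB`. -/
def Esq {α β : Type*} [Fintype α] [DecidableEq α] [Fintype β] [DecidableEq β]
    (ρ : Matrix (α × β) (α × β) ℂ) : ℝ :=
  sInf {x : ℝ | ∃ (m : ℕ) (σ : Matrix ((α × β) × Fin m) ((α × β) × Fin m) ℂ),
    σ.PosSemidef ∧ σ.trace = 1 ∧ ptraceSnd σ = ρ ∧ x = (1 / 2) * condMutInfo σ}

/-- The operator norm `‖·‖_∞` of a matrix, acting on Euclidean space. -/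
def opNorm {ι : Type*} [Fintype ι] [DecidableEq ι] (M : Matrix ι ι ℂ) : ℝ :=
  ‖Matrix.toEuclideanCLM (𝕜 := ℂ) M‖

/-- A bipartite (density) matrix is separable if it is a finite convex combination of
product density matrices. -/
def IsSeparableMat {α β : Type*} [Fintype α] [Fintype β]
    (σ : Matrix (α × β) (α × β) ℂ) : Prop :=
  ∃ (k : ℕ) (p : Fin k → ℝ) (ρA : Fin k → Matrix α α ℂ) (ρB : Fin k → Matrix β β ℂ),
    (∀ i, 0 ≤ p i) ∧ (∑ i, p i = 1) ∧
    (∀ i, (ρA i).PosSemidef) ∧ (∀ i, (ρA i).trace = 1) ∧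
    (∀ i, (ρB i).PosSemidef) ∧ (∀ i, (ρB i).trace = 1) ∧
    σ = ∑ i, p i • Matrix.kroneckerMap (· * ·) (ρA i) (ρB i)

namespace AsymAux
open Equiv

abbrev G (n : ℕ) := Fin n → Perm (Fin 4)

section abs
variable {n : ℕ} {H : Type*} [NormedAddCommGroup H] [InnerProductSpace ℂ H]
  (ρ : G n →* (H →ₗ[ℂ] H))

/-- single-site permutation operator -/
def st (i : Fin n) (σ : Perm (Fin 4)) : H →ₗ[ℂ] H := ρ (Pi.mulSingle i σ)

lemma st_mul (i : Fin n) (σ τ : Perm (Fin 4)) (v : H) :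
    st ρ i σ (st ρ i τ v) = st ρ i (σ * τ) v := by
  unfold st
  rw [Pi.mulSingle_mul, map_mul]; rfl

lemma st_one (i : Fin n) (v : H) : st ρ i 1 v = v := by
  unfold st; rw [Pi.mulSingle_one, map_one]; rfl

lemma st_comm (i j : Fin n) (h : i ≠ j) (σ τ : Perm (Fin 4)) (v : H) :
    st ρ i σ (st ρ j τ v) = st ρ j τ (st ρ i σ v) := by
  have := (Pi.mulSingle_commute (f := fun _ : Fin n => Perm (Fin 4)) h σ τ).eq
  unfold st
  rw [← Module.End.mul_apply, ← Module.End.mul_apply, ← map_mul, ← map_mul, this]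

lemma st_rho (i : Fin n) (σ : Perm (Fin 4)) (g : G n) (hg : g i = 1) (v : H) :
    st ρ i σ (ρ g v) = ρ g (st ρ i σ v) := by
  unfold st
  rw [← Module.End.mul_apply, ← Module.End.mul_apply, ← map_mul, ← map_mul]
  congr 2
  funext j
  by_cases h : j = i
  · subst h; simp [hg]
  · simp [Pi.mulSingle_eq_of_ne h]

def Y (i : Fin n) : H →ₗ[ℂ] H :=
  LinearMap.id + st ρ i (swap 0 2) + st ρ i (swap 0 3) + st ρ i (swap 1 2) + st ρ i (swap 1 3)

lemma Y_apply (i : Fin n) (v : H) : Y ρ i v = v + st ρ i (swap 0 2) v + st ρ i (swap 0 3) v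
    + st ρ i (swap 1 2) v + st ρ i (swap 1 3) v := rfl

lemma Y_st (i j : Fin n) (h : i ≠ j) (σ : Perm (Fin 4)) (v : H) :
    Y ρ i (st ρ j σ v) = st ρ j σ (Y ρ i v) := by
  simp only [Y_apply, map_add, st_comm ρ i j h]

lemma Y_comm (i j : Fin n) (h : i ≠ j) (v : H) :
    Y ρ i (Y ρ j v) = Y ρ j (Y ρ i v) := by
  rw [Y_apply ρ j v, Y_apply ρ j (Y ρ i v)]
  simp only [map_add, Y_st ρ i j h]

def YL : List (Fin n) → (H →ₗ[ℂ] H)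
  | [] => LinearMap.id
  | j :: J => Y ρ j ∘ₗ YL J

lemma YL_st (J : List (Fin n)) (j : Fin n) (h : j ∉ J) (σ : Perm (Fin 4)) (v : H) :
    YL ρ J (st ρ j σ v) = st ρ j σ (YL ρ J v) := by
  induction J with
  | nil => rfl
  | cons k J ih =>
    simp only [List.mem_cons, not_or] at h
    simp only [YL, LinearMap.comp_apply]
    rw [ih h.2, Y_st ρ k j (Ne.symm h.1)]

/-- antisymmetry at a site -/
def AS (i : Fin n) (v : H) : Prop := st ρ i (swap 0 1) v = -v ∧ st ρ i (swap 2 3) v = -v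

/-- the representation preserves the inner product -/
def PI : Prop := ∀ g x y, inner ℂ (ρ g x) (ρ g y) = inner ℂ x y

lemma inner_st (hρ : PI ρ) (i : Fin n) (σ : Perm (Fin 4)) (x y : H) :
    inner ℂ (st ρ i σ x) y = inner ℂ x (st ρ i σ⁻¹ y) := by
  conv_lhs => rw [← st_one ρ i y, ← mul_inv_cancel σ, ← st_mul]
  exact hρ _ _ _

lemma Y_sa (hρ : PI ρ) (i : Fin n) (x y : H) : inner ℂ (Y ρ i x) y = inner ℂ x (Y ρ i y) := by
  simp only [Y_apply, inner_add_left, inner_add_right, inner_st ρ hρ, swap_inv]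

lemma Y_sq (i : Fin n) (v : H) (hv : AS ρ i v) :
    Y ρ i (Y ρ i v) = (5:ℂ) • v + (4:ℂ) • st ρ i (swap 0 2 * swap 1 3) v := by
  obtain ⟨h1, h2⟩ := hv
  have e1 : ∀ σ, st ρ i (σ * swap 0 1) v = - st ρ i σ v := fun σ => by
    rw [← st_mul, h1, map_neg]
  have e2 : ∀ σ, st ρ i (σ * swap 2 3) v = - st ρ i σ v := fun σ => by
    rw [← st_mul, h2, map_neg]
  have p1 : (swap 0 2 * swap 0 3 : Perm (Fin 4)) = swap 0 3 * swap 2 3 := by decide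
  have p2 : (swap 0 3 * swap 0 2 : Perm (Fin 4)) = swap 0 2 * swap 2 3 := by decide
  have p3 : (swap 1 2 * swap 1 3 : Perm (Fin 4)) = swap 1 3 * swap 2 3 := by decide
  have p4 : (swap 1 3 * swap 1 2 : Perm (Fin 4)) = swap 1 2 * swap 2 3 := by decide
  have p5 : (swap 0 2 * swap 1 2 : Perm (Fin 4)) = swap 1 2 * swap 0 1 := by decide
  have p6 : (swap 1 2 * swap 0 2 : Perm (Fin 4)) = swap 0 2 * swap 0 1 := by decide
  have p7 : (swap 0 3 * swap 1 3 : Perm (Fin 4)) = swap 1 3 * swap 0 1 := by decide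
  have p8 : (swap 1 3 * swap 0 3 : Perm (Fin 4)) = swap 0 3 * swap 0 1 := by decide
  have p9 : (swap 1 3 * swap 0 2 : Perm (Fin 4)) = swap 0 2 * swap 1 3 := by decide
  have p10 : (swap 0 3 * swap 1 2 : Perm (Fin 4)) = swap 0 2 * swap 1 3 * swap 0 1 * swap 2 3 := by
    decide
  have p11 : (swap 1 2 * swap 0 3 : Perm (Fin 4)) = swap 0 2 * swap 1 3 * swap 0 1 * swap 2 3 := by
    decide
  simp only [Y_apply, map_add, st_mul, swap_mul_self, st_one, p1, p2, p3, p4, p5, p6, p7, p8, p9,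
    p10, p11, e1, e2]
  module

lemma norm_st (hρ : PI ρ) (i : Fin n) (σ : Perm (Fin 4)) (v : H) : ‖st ρ i σ v‖ = ‖v‖ := by
  have := hρ (Pi.mulSingle i σ) v v
  rw [inner_self_eq_norm_sq_to_K, inner_self_eq_norm_sq_to_K] at this
  have h2 : ‖st ρ i σ v‖ ^ 2 = ‖v‖ ^ 2 := by exact_mod_cast this
  exact (sq_eq_sq₀ (norm_nonneg _) (norm_nonneg _)).1 h2

lemma Y_norm (hρ : PI ρ) (i : Fin n) (v : H) (hv : AS ρ i v) : ‖Y ρ i v‖ ≤ 3 * ‖v‖ := by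
  have h := Y_sa ρ hρ i v (Y ρ i v)
  rw [Y_sq ρ i v hv, inner_self_eq_norm_sq_to_K, inner_add_right, inner_smul_right,
    inner_smul_right, inner_self_eq_norm_sq_to_K] at h
  have h' := congrArg Complex.re h
  have hb : (inner ℂ v (st ρ i (swap 0 2 * swap 1 3) v)).re ≤ ‖v‖ * ‖v‖ := by
    calc _ ≤ ‖inner ℂ v (st ρ i (swap 0 2 * swap 1 3) v)‖ := Complex.re_le_norm _
      _ ≤ _ := norm_inner_le_norm _ _
      _ = _ := by rw [norm_st ρ hρ]
  have h3 : ‖Y ρ i v‖ ^ 2 = 5 * ‖v‖ ^ 2 + 4 * (inner ℂ v (st ρ i (swap 0 2 * swap 1 3) v)).re := by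
    simpa [← Complex.ofReal_pow] using h'
  refine (abs_le_of_sq_le_sq' ?_ (by positivity)).2
  nlinarith

lemma YL_norm (hρ : PI ρ) (J : List (Fin n)) (hJ : J.Nodup) (v : H) (hv : ∀ i, AS ρ i v) :
    ‖YL ρ J v‖ ≤ 3 ^ J.length * ‖v‖ := by
  induction J with
  | nil => simp [YL]
  | cons j J ih =>
    rw [List.nodup_cons] at hJ
    have : AS ρ j (YL ρ J v) := by
      constructor
      · rw [← YL_st ρ J j hJ.1, (hv j).1, map_neg]
      · rw [← YL_st ρ J j hJ.1, (hv j).2, map_neg]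
    calc _ ≤ 3 * ‖YL ρ J v‖ := Y_norm ρ hρ j _ this
      _ ≤ 3 * (3 ^ J.length * ‖v‖) := by gcongr; exact ih hJ.2
      _ = _ := by rw [List.length_cons, pow_succ]; ring

lemma R_step (hρ : PI ρ) (j : Fin n) (J : List (Fin n)) (hj : j ∉ J) (g : G n) (hg : g j = 1) (v : H)
    (hv : AS ρ j v) :
    inner ℂ v (YL ρ (j :: J) (ρ g v)) = inner ℂ v (YL ρ J (ρ g v))
      + 4 * inner ℂ v (YL ρ J (ρ (Pi.mulSingle j (swap 0 2) * g) v)) := by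
  set u := YL ρ J (ρ g v) with hu
  have h1 : st ρ j (swap 0 1) u = -u := by
    rw [hu, ← YL_st ρ J j hj, st_rho ρ j _ g hg, hv.1, map_neg, map_neg]
  have h2 : st ρ j (swap 2 3) u = -u := by
    rw [hu, ← YL_st ρ J j hj, st_rho ρ j _ g hg, hv.2, map_neg, map_neg]
  have hc : YL ρ J (ρ (Pi.mulSingle j (swap 0 2) * g) v) = st ρ j (swap 0 2) u := by
    rw [map_mul, Module.End.mul_apply]; exact YL_st ρ J j hj _ _
  have q1 : ∀ σ, inner ℂ v (st ρ j (swap 0 1 * σ * swap 0 1) u) = inner ℂ v (st ρ j σ u) := by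
    intro σ
    rw [← st_mul, h1, map_neg, ← st_mul, inner_neg_right]
    have := inner_st ρ hρ j (swap 0 1) v (st ρ j σ u)
    rw [swap_inv, hv.1, inner_neg_left] at this
    rw [← this, neg_neg]
  have q2 : ∀ σ, inner ℂ v (st ρ j (swap 2 3 * σ * swap 2 3) u) = inner ℂ v (st ρ j σ u) := by
    intro σ
    rw [← st_mul, h2, map_neg, ← st_mul, inner_neg_right]
    have := inner_st ρ hρ j (swap 2 3) v (st ρ j σ u)
    rw [swap_inv, hv.2, inner_neg_left] at this
    rw [← this, neg_neg]
  have p1 : (swap 0 3 : Perm (Fin 4)) = swap 2 3 * swap 0 2 * swap 2 3 := by decide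
  have p2 : (swap 1 2 : Perm (Fin 4)) = swap 0 1 * swap 0 2 * swap 0 1 := by decide
  have p3 : (swap 1 3 : Perm (Fin 4)) = swap 2 3 * (swap 0 1 * swap 0 2 * swap 0 1) * swap 2 3 := by
    decide
  rw [hc]
  show inner ℂ v (Y ρ j u) = _
  rw [Y_apply, inner_add_right, inner_add_right, inner_add_right, inner_add_right]
  rw [p3, q2, q1, p1, q2, p2, q1]
  ring

lemma R_bound (hρ : PI ρ) (v : H) (hv : ∀ i, AS ρ i v)
    (hpos : ∀ g : G n, (∀ i, g i = 1 ∨ g i = swap 0 2) → 0 ≤ (inner ℂ v (ρ g v)).re)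
    (J : List (Fin n)) (hJ : J.Nodup) (g : G n) (hg : ∀ i, g i = 1 ∨ g i = swap 0 2)
    (hgJ : ∀ i ∈ J, g i = 1) :
    4 ^ J.length * (inner ℂ v (ρ (fun i => if i ∈ J then swap 0 2 else g i) v)).re ≤
      (inner ℂ v (YL ρ J (ρ g v))).re := by
  induction J generalizing g with
  | nil => simp [YL]
  | cons j J ih =>
    rw [List.nodup_cons] at hJ
    rw [R_step ρ hρ j J hJ.1 g (hgJ j (by simp)) v (hv j)]
    have h1 := ih hJ.2 g hg (fun i hi => hgJ i (by simp [hi]))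
    have h0 : 0 ≤ (inner ℂ v (ρ (fun i => if i ∈ J then swap 0 2 else g i) v)).re := by
      apply hpos
      intro i
      by_cases h : i ∈ J
      · simp [h]
      · simpa [h] using hg i
    have hgj := hgJ j (by simp)
    have h2 := ih hJ.2 (Pi.mulSingle j (swap 0 2) * g) (by
      intro i
      by_cases h : i = j
      · subst h; simp [hgj]
      · simpa [Pi.mulSingle_eq_of_ne h] using hg i) (by
      intro i hi
      have h : i ≠ j := fun h => hJ.1 (h ▸ hi)
      simpa [Pi.mulSingle_eq_of_ne h] using hgJ i (by simp [hi]))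
    have he : (fun i => if i ∈ J then swap 0 2 else (Pi.mulSingle j (swap 0 2) * g : G n) i)
        = (fun i => if i ∈ j :: J then swap 0 2 else g i) := by
      funext i
      by_cases h : i = j
      · subst h; simp [hgj]
      · simp [h]
    rw [he] at h2
    have h3 : 0 ≤ (4:ℝ) ^ J.length *
      (inner ℂ v (ρ (fun i => if i ∈ J then swap 0 2 else g i) v)).re := by positivity
    have h4 : ∀ z : ℂ, (4 * z).re = 4 * z.re := fun z => by simp
    rw [Complex.add_re, h4, List.length_cons, pow_succ]
    linarith

theorem abs_main (hρ : PI ρ) (v : H) (hv : ∀ i, AS ρ i v)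
    (hpos : ∀ g : G n, (∀ i, g i = 1 ∨ g i = swap 0 2) → 0 ≤ (inner ℂ v (ρ g v)).re) :
    4 ^ n * (inner ℂ v (ρ (fun _ => swap 0 2) v)).re ≤ 3 ^ n * ‖v‖ ^ 2 := by
  have h := R_bound ρ hρ v hv hpos (List.finRange n) (List.nodup_finRange n) 1
    (fun i => Or.inl rfl) (fun i _ => rfl)
  simp only [List.mem_finRange, if_true, List.length_finRange, map_one] at h
  refine h.trans ?_
  have h2 := YL_norm ρ hρ (List.finRange n) (List.nodup_finRange n) v hv
  rw [List.length_finRange] at h2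
  calc _ ≤ ‖inner ℂ v (YL ρ (List.finRange n) ((1 : H →ₗ[ℂ] H) v))‖ := Complex.re_le_norm _
    _ ≤ ‖v‖ * ‖YL ρ (List.finRange n) v‖ := norm_inner_le_norm _ _
    _ ≤ ‖v‖ * (3 ^ n * ‖v‖) := by gcongr
    _ = _ := by ring

end abs
section conc
variable {n d : ℕ}

abbrev X (n d : ℕ) := Fin n → Fin d
abbrev W (n d : ℕ) := Fin 4 → X n d
abbrev HH (n d : ℕ) := EuclideanSpace ℂ (W n d)

/-- sitewise permutation of the four layers -/
def act (g : G n) (w : W n d) : W n d := fun k i => w (g i k) i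

lemma act_act (g h : G n) (w : W n d) : act h (act g w) = act (g * h) w := rfl

lemma act_one (w : W n d) : act 1 w = w := rfl

def actE (g : G n) : W n d ≃ W n d where
  toFun := act g
  invFun := act g⁻¹
  left_inv w := by rw [act_act, mul_inv_cancel, act_one]
  right_inv w := by rw [act_act, inv_mul_cancel, act_one]

def rho (n d : ℕ) : G n →* (HH n d →ₗ[ℂ] HH n d) where
  toFun g :=
    { toFun := fun v => WithLp.toLp 2 (fun w => v (act g w))
      map_add' := fun x y => by ext w; simp
      map_smul' := fun c x => by ext w; simp }
  map_one' := by ext v w; simp [act_one]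
  map_mul' g h := by ext v w; simp [Module.End.mul_apply, act_act]

lemma rho_apply (g : G n) (v : HH n d) (w : W n d) : rho n d g v w = v (act g w) := rfl

lemma rho_PI : PI (rho n d) := by
  intro g x y
  simp only [PiLp.inner_apply, rho_apply]
  exact (actE g).sum_comp (fun w => inner ℂ (x w) (y w))

/-- sums over four layers -/
def quadE (A : Type*) : (A × A) × (A × A) ≃ (Fin 4 → A) where
  toFun p := ![p.1.1, p.1.2, p.2.1, p.2.2]
  invFun w := ((w 0, w 1), (w 2, w 3))
  left_inv p := rfl
  right_inv w := by funext k; fin_cases k <;> rfl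

lemma sum_quad {A : Type*} [Fintype A] (f : (Fin 4 → A) → ℂ) :
    ∑ w, f w = ∑ x, ∑ y, ∑ x', ∑ y', f ![x, y, x', y'] := by
  rw [← (quadE A).sum_comp, Fintype.sum_prod_type, Fintype.sum_prod_type]
  simp only [Fintype.sum_prod_type]
  rfl

/-- two copies of `η` -/
def two (η : X n d → X n d → ℂ) : HH n d := WithLp.toLp 2 fun w => η (w 0) (w 1) * η (w 2) (w 3)

lemma two_apply (η : X n d → X n d → ℂ) (w : W n d) :
    two η w = η (w 0) (w 1) * η (w 2) (w 3) := rfl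

def Anti (η : X n d → X n d → ℂ) : Prop :=
  ∀ i x y, η (Function.update x i (y i)) (Function.update y i (x i)) = - η x y

lemma two_AS (η : X n d → X n d → ℂ) (h : Anti η) (i : Fin n) : AS (rho n d) i (two η) := by
  constructor
  · ext w
    have e0 : act (Pi.mulSingle i (swap 0 1)) w 0 = Function.update (w 0) i (w 1 i) := by
      funext j
      by_cases hj : j = i
      · subst hj; simp [act]
      · simp [act, hj]
    have e1 : act (Pi.mulSingle i (swap 0 1)) w 1 = Function.update (w 1) i (w 0 i) := by
      funext j
      by_cases hj : j = i
      · subst hj; simp [act]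
      · simp [act, hj]
    have e2 : act (Pi.mulSingle i (swap 0 1)) w 2 = w 2 := by
      funext j
      by_cases hj : j = i
      · subst hj; simp [act, swap_apply_of_ne_of_ne]
      · simp [act, hj]
    have e3 : act (Pi.mulSingle i (swap 0 1)) w 3 = w 3 := by
      funext j
      by_cases hj : j = i
      · subst hj; simp [act, swap_apply_of_ne_of_ne]
      · simp [act, hj]
    rw [st, rho_apply, two_apply, e0, e1, e2, e3, h i (w 0) (w 1), PiLp.neg_apply, two_apply]
    ring
  · ext w
    have e0 : act (Pi.mulSingle i (swap 2 3)) w 2 = Function.update (w 2) i (w 3 i) := by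
      funext j
      by_cases hj : j = i
      · subst hj; simp [act]
      · simp [act, hj]
    have e1 : act (Pi.mulSingle i (swap 2 3)) w 3 = Function.update (w 3) i (w 2 i) := by
      funext j
      by_cases hj : j = i
      · subst hj; simp [act]
      · simp [act, hj]
    have e2 : act (Pi.mulSingle i (swap 2 3)) w 0 = w 0 := by
      funext j
      by_cases hj : j = i
      · subst hj; simp [act, swap_apply_of_ne_of_ne]
      · simp [act, hj]
    have e3 : act (Pi.mulSingle i (swap 2 3)) w 1 = w 1 := by
      funext j
      by_cases hj : j = i
      · subst hj; simp [act, swap_apply_of_ne_of_ne]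
      · simp [act, hj]
    rw [st, rho_apply, two_apply, e0, e1, e2, e3, h i (w 2) (w 3), PiLp.neg_apply, two_apply]
    ring

lemma two_norm (η : X n d → X n d → ℂ) :
    ‖two η‖ ^ 2 = (∑ x, ∑ y, Complex.normSq (η x y)) ^ 2 := by
  have : ((‖two η‖ ^ 2 : ℝ) : ℂ) = (((∑ x, ∑ y, Complex.normSq (η x y)) ^ 2 : ℝ) : ℂ) := by
    rw [EuclideanSpace.norm_sq_eq]
    push_cast
    rw [sum_quad, sq, Finset.sum_mul]
    simp only [two_apply]
    refine Finset.sum_congr rfl fun x _ => ?_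
    rw [Finset.sum_mul]
    refine Finset.sum_congr rfl fun y _ => ?_
    rw [Finset.mul_sum]
    refine Finset.sum_congr rfl fun x' _ => ?_
    rw [Finset.mul_sum]
    refine Finset.sum_congr rfl fun y' _ => ?_
    simp [Complex.normSq_eq_norm_sq, mul_pow]
  exact_mod_cast this

/-- exchange of the first and third layers -/
lemma inner_swap (η : X n d → X n d → ℂ) (g : G n) (hg : ∀ i, g i = 1 ∨ g i = swap 0 2) :
    inner ℂ (two η) (rho n d g (two η)) = ∑ x, ∑ x', 
      (∑ y, star (η x y) * η (fun i => if g i = 1 then x i else x' i) y) *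
      (∑ y', star (η x' y') * η (fun i => if g i = 1 then x' i else x i) y') := by
  rw [PiLp.inner_apply, sum_quad]
  refine Finset.sum_congr rfl fun x _ => ?_
  rw [Finset.sum_comm]
  refine Finset.sum_congr rfl fun x' _ => ?_
  rw [Finset.sum_mul]
  refine Finset.sum_congr rfl fun y _ => ?_
  rw [Finset.mul_sum]
  refine Finset.sum_congr rfl fun y' _ => ?_
  have n1 : (swap 0 2 : Perm (Fin 4)) ≠ 1 := by decide
  have e0 : act g ![x, y, x', y'] 0 = fun i => if g i = 1 then x i else x' i := by
    funext i
    rcases hg i with h | h <;> simp [act, h, n1]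
  have e2 : act g ![x, y, x', y'] 2 = fun i => if g i = 1 then x' i else x i := by
    funext i
    rcases hg i with h | h <;> simp [act, h, n1]
  have e1 : act g ![x, y, x', y'] 1 = y := by
    funext i
    rcases hg i with h | h <;> simp [act, h, swap_apply_of_ne_of_ne]
  have e3 : act g ![x, y, x', y'] 3 = y' := by
    funext i
    rcases hg i with h | h <;> simp [act, h, swap_apply_of_ne_of_ne]
  rw [rho_apply, two_apply, two_apply, e0, e1, e2, e3]
  simp
  ring

lemma inner_pos (η : X n d → X n d → ℂ) (g : G n) (hg : ∀ i, g i = 1 ∨ g i = swap 0 2) :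
    0 ≤ (inner ℂ (two η) (rho n d g (two η))).re := by
  rw [inner_swap η g hg]
  let e := Equiv.piEquivPiSubtypeProd (fun i => g i = 1) (fun _ : Fin n => Fin d)
  -- glue fixed part `z` and swapped part `u`
  let A := fun u u' => ∑ z, ∑ y, star (η (e.symm (z, u)) y) * η (e.symm (z, u')) y
  have key : ∀ F : X n d → X n d → ℂ, ∑ x, ∑ x', F x x' =
      ∑ u, ∑ u', ∑ z, ∑ z', F (e.symm (z, u)) (e.symm (z', u')) := by
    intro F
    have e1 : ∀ f : X n d → ℂ, ∑ x, f x = ∑ u, ∑ z, f (e.symm (z, u)) := by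
      intro f
      rw [← e.symm.sum_comp f, Fintype.sum_prod_type]
      exact Finset.sum_comm
    rw [e1]
    refine Finset.sum_congr rfl fun u _ => ?_
    refine Eq.trans ?_ Finset.sum_comm
    refine Finset.sum_congr rfl fun z _ => ?_
    rw [e1]
  have glue : ∀ u u' z z', (fun i => if g i = 1 then e.symm (z, u) i else e.symm (z', u') i)
      = e.symm (z, u') := by
    intro u u' z z'
    funext i
    by_cases h : g i = 1 <;> simp [e, Equiv.piEquivPiSubtypeProd, h]
  have : ∑ x, ∑ x', 
      (∑ y, star (η x y) * η (fun i => if g i = 1 then x i else x' i) y) *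
      (∑ y', star (η x' y') * η (fun i => if g i = 1 then x' i else x i) y')
      = ∑ u, ∑ u', A u u' * star (A u u') := by
    rw [key]
    refine Finset.sum_congr rfl fun u _ => ?_
    refine Finset.sum_congr rfl fun u' _ => ?_
    have hs : star (A u u') = A u' u := by
      simp only [A, star_sum, star_mul, star_star]
    rw [hs]
    simp only [A, glue]
    rw [Finset.sum_mul_sum]
  rw [this, Complex.re_sum]
  refine Finset.sum_nonneg fun u _ => ?_
  rw [Complex.re_sum]
  refine Finset.sum_nonneg fun u' _ => ?_
  have : A u u' * star (A u u') = (Complex.normSq (A u u') : ℂ) := Complex.mul_conj _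
  rw [this, Complex.ofReal_re]
  exact Complex.normSq_nonneg _

theorem purity_le (η : X n d → X n d → ℂ) (h : Anti η) :
    4 ^ n * ∑ x, ∑ x', Complex.normSq (∑ y, star (η x y) * η x' y)
      ≤ 3 ^ n * (∑ x, ∑ y, Complex.normSq (η x y)) ^ 2 := by
  have := abs_main (rho n d) rho_PI (two η) (two_AS η h) (inner_pos η)
  rw [two_norm, inner_swap η _ (fun _ => Or.inr rfl)] at this
  have n1 : (swap 0 2 : Perm (Fin 4)) ≠ 1 := by decide
  simp only [n1, if_false] at this
  convert this using 2
  rw [Complex.re_sum]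
  refine Finset.sum_congr rfl fun x _ => ?_
  rw [Complex.re_sum]
  refine Finset.sum_congr rfl fun x' _ => ?_
  have : (∑ y', star (η x' y') * η x y') = star (∑ y, star (η x y) * η x' y) := by
    rw [star_sum]
    refine Finset.sum_congr rfl fun y _ => ?_
    simp [mul_comm]
  rw [this]
  have : (∑ y, star (η x y) * η x' y) * star (∑ y, star (η x y) * η x' y) =
    (Complex.normSq (∑ y, star (η x y) * η x' y) : ℂ) := Complex.mul_conj _
  rw [this, Complex.ofReal_re]

/-- Cauchy-Schwarz for finite complex sums -/
lemma cs {ι : Type*} [Fintype ι] (f g : ι → ℂ) :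
    Complex.normSq (∑ i, f i * g i) ≤ (∑ i, Complex.normSq (f i)) * ∑ i, Complex.normSq (g i) := by
  have h1 : ‖∑ i, f i * g i‖ ≤ ∑ i, ‖f i‖ * ‖g i‖ :=
    (norm_sum_le _ _).trans (le_of_eq (by simp))
  have h2 := Finset.sum_mul_sq_le_sq_mul_sq Finset.univ (fun i => ‖f i‖) (fun i => ‖g i‖)
  simp only [Complex.normSq_eq_norm_sq]
  refine le_trans ?_ h2
  gcongr

/-- overlap with a product vector versus purity -/
lemma overlap_le (η : X n d → X n d → ℂ) (a b : X n d → ℂ)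
    (ha : ∑ v, Complex.normSq (a v) = 1) (hb : ∑ v, Complex.normSq (b v) = 1) :
    Complex.normSq (∑ x, ∑ y, star (a x) * star (b y) * η x y) ^ 2 ≤
      ∑ x, ∑ x', Complex.normSq (∑ y, star (η x y) * η x' y) := by
  have e1 : ∑ x, ∑ y, star (a x) * star (b y) * η x y
      = ∑ y, star (b y) * ∑ x, star (a x) * η x y := by
    rw [Finset.sum_comm]
    refine Finset.sum_congr rfl fun y _ => ?_
    rw [Finset.mul_sum]
    refine Finset.sum_congr rfl fun x _ => ?_
    ring
  have h1 : Complex.normSq (∑ x, ∑ y, star (a x) * star (b y) * η x y) ≤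
      ∑ y, Complex.normSq (∑ x, star (a x) * η x y) := by
    rw [e1]
    refine (cs _ _).trans (le_of_eq ?_)
    have : ∀ z : ℂ, Complex.normSq (star z) = Complex.normSq z := Complex.normSq_conj
    simp only [this, hb, one_mul]
  have e2 : ((∑ y, Complex.normSq (∑ x, star (a x) * η x y) : ℝ) : ℂ) =
      ∑ p : X n d × X n d, (a p.1 * star (a p.2)) * ∑ y, star (η p.1 y) * η p.2 y := by
    push_cast
    simp only [Complex.normSq_eq_conj_mul_self]
    rw [Fintype.sum_prod_type]
    simp only [map_sum, Finset.sum_mul_sum]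
    rw [Finset.sum_comm]
    refine Finset.sum_congr rfl fun x _ => ?_
    rw [Finset.sum_comm]
    refine Finset.sum_congr rfl fun x' _ => ?_
    rw [Finset.mul_sum]
    refine Finset.sum_congr rfl fun y _ => ?_
    simp
    ring
  have h2 := cs (fun p : X n d × X n d => a p.1 * star (a p.2))
    (fun p => ∑ y, star (η p.1 y) * η p.2 y)
  rw [← e2, Complex.normSq_ofReal, Fintype.sum_prod_type, Fintype.sum_prod_type] at h2
  have : ∀ z : ℂ, Complex.normSq (star z) = Complex.normSq z := Complex.normSq_conj
  simp only [Complex.normSq_mul, this, ← Finset.mul_sum, ha, mul_one, one_mul] at h2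
  refine le_trans ?_ h2
  rw [← sq]
  have := Complex.normSq_nonneg (∑ x, ∑ y, star (a x) * star (b y) * η x y)
  gcongr

end conc
section fin
variable {n d : ℕ}

lemma asymProj_swap (x y : Fin d) (q : Fin d × Fin d) :
    asymProj d (y, x) q = - asymProj d (x, y) q := by
  simp only [asymProj, Matrix.of_apply]
  simp only [and_comm (a := y = q.1), and_comm (a := y = q.2)]
  ring

lemma asymProj_herm (p q : Fin d × Fin d) : star (asymProj d q p) = asymProj d p q := by
  obtain ⟨x, y⟩ := p
  obtain ⟨u, v⟩ := q
  simp only [asymProj, Matrix.of_apply]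
  simp only [eq_comm (a := u) (b := x), eq_comm (a := v) (b := y), eq_comm (a := u) (b := y),
    eq_comm (a := v) (b := x), and_comm (a := y = u)]
  split_ifs <;> simp

lemma asymProj_idem (p r : Fin d × Fin d) :
    ∑ q, asymProj d p q * asymProj d q r = asymProj d p r := by
  have key : ∀ f : Fin d × Fin d → ℂ, ∑ q, asymProj d p q * f q
      = 1 / 2 * (f p - f (p.2, p.1)) := by
    intro f
    have h1 : ∀ q : Fin d × Fin d, asymProj d p q * f q =
        (if p = q then 1 / 2 * f q else 0) - (if (p.2, p.1) = q then 1 / 2 * f q else 0) := by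
      intro q
      simp only [asymProj, Matrix.of_apply, Prod.ext_iff]
      simp only [and_comm (a := p.1 = q.2)]
      split_ifs <;> ring
    simp only [h1, Finset.sum_sub_distrib, Finset.sum_ite_eq, Finset.mem_univ, if_true]
    ring
  rw [key, asymProj_swap p.1 p.2]
  ring

lemma asymPow_herm : (asymPow d n).conjTranspose = asymPow d n := by
  ext p q
  simp only [Matrix.conjTranspose_apply, asymPow, Matrix.of_apply]
  rw [star_prod]
  exact Finset.prod_congr rfl fun i _ => asymProj_herm _ _

lemma asymPow_idem : asymPow d n * asymPow d n = asymPow d n := by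
  ext p r
  simp only [Matrix.mul_apply, asymPow, Matrix.of_apply]
  rw [← (Equiv.arrowProdEquivProdArrow (Fin n) (fun _ => Fin d) (fun _ => Fin d)).sum_comp]
  simp only [← Finset.prod_mul_distrib]
  calc _ = ∑ q : Fin n → Fin d × Fin d, ∏ i, (asymProj d (p.1 i, p.2 i) (q i) *
        asymProj d (q i) (r.1 i, r.2 i)) := rfl
    _ = ∏ i, ∑ q : Fin d × Fin d, (asymProj d (p.1 i, p.2 i) q *
        asymProj d q (r.1 i, r.2 i)) := by
      rw [Finset.prod_univ_sum, Fintype.piFinset_univ]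
    _ = _ := by simp only [asymProj_idem]

lemma asymPow_anti (i : Fin n) (x y : X n d) (q : X n d × X n d) :
    asymPow d n (Function.update x i (y i), Function.update y i (x i)) q
      = - asymPow d n (x, y) q := by
  simp only [asymPow, Matrix.of_apply]
  rw [← Finset.mul_prod_erase Finset.univ _ (Finset.mem_univ i),
    ← Finset.mul_prod_erase Finset.univ
      (fun j => asymProj d (x j, y j) (q.1 j, q.2 j)) (Finset.mem_univ i)]
  simp only [Function.update_self]
  rw [asymProj_swap, neg_mul]
  congr 2
  refine Finset.prod_congr rfl fun j hj => ?_
  have := Finset.ne_of_mem_erase hj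
  simp [this]

end fin

end AsymAux

/-- for all unit vectors `α, β ∈ (ℂ^d)^{⊗n}`,
`⟨α⊗β| (P₂^{(d)})^{⊗n} |α⊗β⟩ ≤ (3/4)^{n/2}`. -/
theorem product_overlap_asymPow_le (d n : ℕ) (hd : 2 ≤ d) (hn : 1 ≤ n)
    (a b : (Fin n → Fin d) → ℂ)
    (ha : ∑ v, Complex.normSq (a v) = 1) (hb : ∑ v, Complex.normSq (b v) = 1) :
    (dotProduct
        (star fun p : (Fin n → Fin d) × (Fin n → Fin d) => a p.1 * b p.2)
        ((asymPow d n).mulVec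
          fun p : (Fin n → Fin d) × (Fin n → Fin d) => a p.1 * b p.2)).re
      ≤ Real.sqrt ((3 / 4 : ℝ) ^ n) := by
  classical
  let u : (Fin n → Fin d) × (Fin n → Fin d) → ℂ := fun p => a p.1 * b p.2
  let η : (Fin n → Fin d) → (Fin n → Fin d) → ℂ := fun x y => (asymPow d n).mulVec u (x, y)
  have hanti : AsymAux.Anti η := by
    intro i x y
    simp only [η, Matrix.mulVec, dotProduct, AsymAux.asymPow_anti, neg_mul,
      Finset.sum_neg_distrib]
  set N : ℝ := ∑ x, ∑ y, Complex.normSq (η x y) with hN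
  have hS : dotProduct (star u) ((asymPow d n).mulVec u) = (N : ℂ) := by
    have h1 : dotProduct (star ((asymPow d n).mulVec u)) ((asymPow d n).mulVec u) =
        dotProduct (star u) ((asymPow d n).mulVec u) := by
      rw [Matrix.star_mulVec, AsymAux.asymPow_herm, ← Matrix.dotProduct_mulVec,
        Matrix.mulVec_mulVec, AsymAux.asymPow_idem]
    rw [← h1, hN, dotProduct, Fintype.sum_prod_type]
    push_cast
    refine Finset.sum_congr rfl fun x _ => Finset.sum_congr rfl fun y _ => ?_
    rw [Complex.normSq_eq_conj_mul_self]
    rfl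
  have hS2 : ∑ x, ∑ y, star (a x) * star (b y) * η x y = (N : ℂ) := by
    rw [← hS, dotProduct, Fintype.sum_prod_type]
    refine Finset.sum_congr rfl fun x _ => Finset.sum_congr rfl fun y _ => ?_
    simp [u, η]
  have h1 := AsymAux.overlap_le η a b ha hb
  have h2 := AsymAux.purity_le η hanti
  rw [hS2, Complex.normSq_ofReal] at h1
  rw [← hN] at h2
  have hN0 : 0 ≤ N :=
    Finset.sum_nonneg fun x _ => Finset.sum_nonneg fun y _ => Complex.normSq_nonneg _
  change (dotProduct (star u) ((asymPow d n).mulVec u)).re ≤ _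
  rw [hS, Complex.ofReal_re]
  apply Real.le_sqrt_of_sq_le
  rcases hN0.eq_or_lt with h0 | h0
  · rw [← h0, zero_pow two_ne_zero]; positivity
  have h4 : (0:ℝ) < 4 ^ n := by positivity
  have h5 : 4 ^ n * (N * N) ^ 2 ≤ 3 ^ n * N ^ 2 :=
    le_trans (mul_le_mul_of_nonneg_left h1 h4.le) h2
  rw [div_pow, le_div_iff₀ h4]
  have h6 : 0 < N ^ 2 := by positivity
  refine le_of_mul_le_mul_right ?_ h6
  linarith [h5, (by ring : 4 ^ n * (N * N) ^ 2 = N ^ 2 * 4 ^ n * N ^ 2)]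

end
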